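/- (Theorem 4.3.) Let k ≥ 0 be an integer and let q, a be complex numbers with 0 < |q| < 1, a q^n ≠ 1 for all n ≥ 1, and a^{2^k} ≠ 1. Then (1/(aq;q)_∞) · ∑_{r=0}^{∞} a^{2r} q^{2r^2 + 2^k r(r-1)/2} · (1 - a^{2^k} q^{r·2^{k+1}}) · (a^{2^k}; q^{2^k})_r · (-1)^r / [(1 - a^{2^k}) (q^{2^k}; q^{2^k})_r] = ∑_{s_1 ≥ s_2 ≥ ⋯ ≥ s_{k+1} ≥ 0} a^{s_1 + s_2} q^{E} / (q;q)_{s_1-s_2} · ∏_{i=3}^{k+2} (-a^{2^{i-3}} q^{2^{i-3}}; q^{2^{i-3}})_{2 s_i} / (q^{2^{i-2}}; q^{2^{i-2}})_{s_{i-1} - s_i}, where E = s_1^2 + s_2^2 + s_2 + s_3 + 2 s_4 + ⋯ + 2^{k-2} s_{k+1} = s_1^2 + s_2^2 + s_2 + ∑_{m=3}^{k+1} 2^{m-3} s_m, with the convention s_{k+2} = 0 (for k = 0 the right side is a single sum over s_1 ≥ 0 with E = s_1^2). -/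

import Mathlib

/-- The finite q-Pochhammer symbol `(x;q)_n = ∏_{j=0}^{n-1} (1 - x q^j)`. -/
noncomputable def qPoch (x q : ℂ) (n : ℕ) : ℂ := ∏ j ∈ Finset.range n, (1 - x * q ^ j)

/-- The infinite q-Pochhammer symbol `(x;q)_∞ = ∏_{j=0}^{∞} (1 - x q^j)`. -/
noncomputable def qPochInf (x q : ℂ) : ℂ := ∏' j : ℕ, (1 - x * q ^ j)

/-!
A Bailey pair relative to `(a, q)` is a pair of sequences with
`β_n = ∑_{r ≤ n} α_r / ((q;q)_{n-r} (aq;q)_{n+r})`. Start from the unit pair relative to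
`(a^{2^k}, q^{2^k})`, whose `β` is `(1, 0, 0, …)`. A change of base turns a pair relative to
`(a², q²)` into one relative to `(a, q)` with the same `α`, at the cost of one more summation in
`β`. After `k` of these, one step of Bailey's lemma multiplies `α_r` by `a^r q^{r²}`, and the limit
`n → ∞` of a second such step equates `∑ a^n q^{n²} β_n` with `∑ a^r q^{r²} α_r / (aq;q)_∞`.
Unfolding the iterated summations on the left gives the multisum.

The change of base divides by `(a² q²; q²)_n`, which can vanish although `(aq;q)_n` does not, for
instance at `a = -q⁻¹`. The final pair makes sense for such `a` and is obtained by continuity in `a`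
from the dense set of parameters where every intermediate pair is defined.
-/

open Filter Finset Topology

section Antidiagonal

theorem sum_antidiagonal_assoc {A M : Type*} [AddMonoid A] [HasAntidiagonal A] [AddCommMonoid M]
    (n : A) (f : A → A → A → M) :
    ∑ p ∈ antidiagonal n, ∑ s ∈ antidiagonal p.2, f p.1 s.1 s.2 =
      ∑ p ∈ antidiagonal n, ∑ s ∈ antidiagonal p.1, f s.1 s.2 p.2 := by
  simp only [sum_sigma']
  refine sum_nbij' (fun ⟨⟨i, _⟩, ⟨j, r⟩⟩ ↦ ⟨(i + j, r), (i, j)⟩)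
    (fun ⟨⟨_, r⟩, ⟨i, j⟩⟩ ↦ ⟨(i, j + r), (j, r)⟩) ?_ ?_ ?_ ?_ fun _ _ ↦ rfl <;>
  · rintro ⟨⟨_, _⟩, ⟨_, _⟩⟩ h
    simp only [mem_sigma, HasAntidiagonal.mem_antidiagonal] at h ⊢
    obtain ⟨rfl, rfl⟩ := h
    simp only [add_assoc, and_self]

end Antidiagonal

section GaussBinom

variable {R : Type*}

/-- The Gaussian binomial coefficient `[n, k]_q`, defined by its Pascal recurrence so that no
quotient of `q`-factorials is involved and `q` may be a root of unity. -/
def gaussBinom [CommSemiring R] (q : R) : ℕ → ℕ → R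
  | _, 0 => 1
  | 0, _ + 1 => 0
  | n + 1, k + 1 => gaussBinom q n k + q ^ (k + 1) * gaussBinom q n (k + 1)

variable [CommSemiring R] (q : R)

@[simp]
theorem gaussBinom_zero_right (n : ℕ) : gaussBinom q n 0 = 1 := by
  cases n <;> rfl

theorem gaussBinom_succ_succ (n k : ℕ) :
    gaussBinom q (n + 1) (k + 1) = gaussBinom q n k + q ^ (k + 1) * gaussBinom q n (k + 1) :=
  rfl

theorem gaussBinom_eq_zero_of_lt {n k : ℕ} (h : n < k) : gaussBinom q n k = 0 := by
  induction n generalizing k with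
  | zero => cases k with
    | zero => omega
    | succ k => rfl
  | succ n ih => cases k with
    | zero => omega
    | succ k => rw [gaussBinom_succ_succ, ih (by omega), ih (by omega), mul_zero, add_zero]

theorem gaussBinom_self (n : ℕ) : gaussBinom q n n = 1 := by
  induction n with
  | zero => rfl
  | succ n ih =>
    rw [gaussBinom_succ_succ, ih, gaussBinom_eq_zero_of_lt q n.lt_succ_self, mul_zero, add_zero]

theorem gaussBinom_succ_succ' (n k : ℕ) :
    gaussBinom q (n + 1) (k + 1) =
      q ^ (n - k) * gaussBinom q n k + gaussBinom q n (k + 1) := by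
  induction n generalizing k with
  | zero => cases k <;> simp [gaussBinom]
  | succ n ih => cases k with
    | zero =>
      rw [gaussBinom_succ_succ]
      conv_lhs => rw [ih]
      rw [gaussBinom_succ_succ q n]
      simp only [gaussBinom_zero_right, Nat.sub_zero]
      ring
    | succ k =>
      have hpow : q ^ (k + 2) * q ^ (n - (k + 1)) * gaussBinom q n (k + 1) =
          q ^ (n - k) * q ^ (k + 1) * gaussBinom q n (k + 1) := by
        rcases lt_or_ge n (k + 1) with h | h
        · simp only [gaussBinom_eq_zero_of_lt q h, mul_zero]
        · simp only [← pow_add]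
          congr 2
          omega
      calc gaussBinom q (n + 2) (k + 2)
          = q ^ (n - k) * gaussBinom q n k + gaussBinom q n (k + 1) +
              (q ^ (k + 2) * q ^ (n - (k + 1)) * gaussBinom q n (k + 1) +
                q ^ (k + 2) * gaussBinom q n (k + 2)) := by
            rw [gaussBinom_succ_succ, ih, ih, mul_add, mul_assoc]
        _ = q ^ (n - k) * gaussBinom q (n + 1) (k + 1) + gaussBinom q (n + 1) (k + 2) := by
            rw [hpow, gaussBinom_succ_succ q n k, gaussBinom_succ_succ q n (k + 1)]
            ring
        _ = _ := by rw [Nat.add_sub_add_right]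

theorem sum_antidiagonal_gaussBinom_mul_succ (f : ℕ → ℕ → R) (n : ℕ) :
    f (n + 1) 0 + ∑ p ∈ antidiagonal n, gaussBinom q n (p.2 + 1) * f p.1 (p.2 + 1) =
      ∑ p ∈ antidiagonal n, gaussBinom q n p.2 * f (p.1 + 1) p.2 := by
  have h := Nat.sum_antidiagonal_succ' (n := n) (f := fun p ↦ gaussBinom q n p.2 * f p.1 p.2)
  rw [Nat.sum_antidiagonal_succ] at h
  simpa [gaussBinom_eq_zero_of_lt] using h.symm

theorem sum_antidiagonal_succ_gaussBinom_mul (f : ℕ → ℕ → R) (n : ℕ) :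
    ∑ p ∈ antidiagonal (n + 1), gaussBinom q (n + 1) p.2 * f p.1 p.2 =
      ∑ p ∈ antidiagonal n, gaussBinom q n p.2 * (q ^ p.2 * f (p.1 + 1) p.2) +
        ∑ p ∈ antidiagonal n, gaussBinom q n p.2 * f p.1 (p.2 + 1) := by
  rw [Nat.sum_antidiagonal_succ',
    ← sum_antidiagonal_gaussBinom_mul_succ q (fun i j ↦ q ^ j * f i j), add_assoc,
    ← sum_add_distrib]
  simp only [gaussBinom_zero_right, gaussBinom_succ_succ, pow_zero, one_mul]
  congr! 2
  ring

theorem sum_antidiagonal_succ_gaussBinom_mul' (f : ℕ → ℕ → R) (n : ℕ) :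
    ∑ p ∈ antidiagonal (n + 1), gaussBinom q (n + 1) p.2 * f p.1 p.2 =
      ∑ p ∈ antidiagonal n, gaussBinom q n p.2 * f (p.1 + 1) p.2 +
        ∑ p ∈ antidiagonal n, gaussBinom q n p.2 * (q ^ p.1 * f p.1 (p.2 + 1)) := by
  rw [Nat.sum_antidiagonal_succ', ← sum_antidiagonal_gaussBinom_mul_succ, add_assoc,
    ← sum_add_distrib]
  simp only [gaussBinom_zero_right, gaussBinom_succ_succ', one_mul]
  congr 1
  refine sum_congr rfl fun p hp ↦ ?_
  rw [Nat.sub_eq_of_eq_add (HasAntidiagonal.mem_antidiagonal.mp hp).symm]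
  ring

end GaussBinom

section QPochhammer

theorem qPoch_zero (x q : ℂ) : qPoch x q 0 = 1 :=
  prod_range_zero _

theorem qPoch_succ (x q : ℂ) (n : ℕ) : qPoch x q (n + 1) = qPoch x q n * (1 - x * q ^ n) :=
  prod_range_succ _ _

theorem qPoch_add (x q : ℂ) (m n : ℕ) :
    qPoch x q (m + n) = qPoch x q m * qPoch (x * q ^ m) q n := by
  simp only [qPoch, prod_range_add, pow_add, mul_assoc]

theorem qPoch_succ_left (x q : ℂ) (n : ℕ) :
    qPoch x q (n + 1) = (1 - x) * qPoch (x * q) q n := by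
  rw [add_comm, qPoch_add, qPoch_succ, qPoch_zero, pow_zero, mul_one, one_mul, pow_one]

theorem qPoch_sq (x q : ℂ) (n : ℕ) :
    qPoch (x ^ 2) (q ^ 2) n = qPoch x q n * qPoch (-x) q n := by
  simp only [qPoch, ← prod_mul_distrib]
  refine prod_congr rfl fun j _ ↦ ?_
  ring

theorem qPoch_ne_zero_iff {x q : ℂ} {n : ℕ} : qPoch x q n ≠ 0 ↔ ∀ j < n, x * q ^ j ≠ 1 := by
  rw [qPoch, prod_ne_zero_iff]
  exact forall_congr' fun j ↦ imp_congr mem_range (sub_ne_zero.trans ne_comm)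

theorem forall_qPoch_ne_zero_iff {x q : ℂ} :
    (∀ n, qPoch x q n ≠ 0) ↔ ∀ j, x * q ^ j ≠ 1 := by
  simp only [qPoch_ne_zero_iff]
  exact ⟨fun h j ↦ h (j + 1) j j.lt_succ_self, fun h _ j _ ↦ h j⟩

theorem qPoch_self_ne_zero {q : ℂ} (hq : ¬IsOfFinOrder q) (n : ℕ) : qPoch q q n ≠ 0 := by
  refine forall_qPoch_ne_zero_iff.mpr (fun j h ↦ hq ?_) n
  exact isOfFinOrder_iff_pow_eq_one.mpr ⟨j + 1, j.succ_pos, by rw [pow_succ', h]⟩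

theorem qPoch_mul_self_ne_zero {a q : ℂ} (ha : ∀ n, qPoch a q n ≠ 0) (n : ℕ) :
    qPoch (a * q) q n ≠ 0 :=
  right_ne_zero_of_mul (qPoch_succ_left a q n ▸ ha (n + 1))

theorem gaussBinom_mul_qPoch_mul_qPoch (q : ℂ) (i j : ℕ) :
    gaussBinom q (i + j) j * (qPoch q q i * qPoch q q j) = qPoch q q (i + j) := by
  induction j generalizing i with
  | zero => simp [qPoch_zero]
  | succ j ihj => induction i with
    | zero => simp [qPoch_zero, gaussBinom_self]
    | succ i ihi =>
      have hj := ihj (i + 1)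
      rw [add_right_comm, add_assoc] at hj
      rw [add_right_comm, gaussBinom_succ_succ, qPoch_succ q q (i + (j + 1))]
      rw [qPoch_succ] at hj ⊢
      rw [qPoch_succ] at ihi ⊢
      linear_combination (1 - q * q ^ j) * hj + q ^ (j + 1) * (1 - q * q ^ i) * ihi

theorem gaussBinom_eq_div {q : ℂ} (hq : ¬IsOfFinOrder q) (i j : ℕ) :
    gaussBinom q (i + j) j = qPoch q q (i + j) / (qPoch q q i * qPoch q q j) :=
  eq_div_of_mul_eq (mul_ne_zero (qPoch_self_ne_zero hq i) (qPoch_self_ne_zero hq j))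
    (gaussBinom_mul_qPoch_mul_qPoch q i j)

end QPochhammer

section FiniteSums

theorem sum_antidiagonal_gaussBinom_mul_qPoch (b q : ℂ) (n : ℕ) :
    ∑ p ∈ antidiagonal n,
      gaussBinom q n p.2 * (b ^ p.2 * q ^ p.2 ^ 2 * qPoch (b * q ^ (p.2 + 1)) q p.1) = 1 := by
  induction n generalizing b with
  | zero => simp [qPoch_zero]
  | succ n ih =>
    have hfst : ∑ p ∈ antidiagonal n, gaussBinom q n p.2 *
          (b ^ p.2 * q ^ p.2 ^ 2 * qPoch (b * q ^ (p.2 + 1)) q (p.1 + 1)) =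
        1 - b * q ^ (n + 1) := by
      have h := congrArg ((1 - b * q ^ (n + 1)) * ·) (ih b)
      simp only [mul_sum, mul_one] at h
      rw [← h]
      refine sum_congr rfl fun p hp ↦ ?_
      rw [← HasAntidiagonal.mem_antidiagonal.mp hp, qPoch_succ]
      ring
    have hsnd : ∑ p ∈ antidiagonal n, gaussBinom q n p.2 * (q ^ p.1 *
          (b ^ (p.2 + 1) * q ^ (p.2 + 1) ^ 2 * qPoch (b * q ^ (p.2 + 1 + 1)) q p.1)) =
        b * q ^ (n + 1) := by
      have h := congrArg (b * q ^ (n + 1) * ·) (ih (b * q))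
      simp only [mul_sum, mul_one] at h
      rw [← h]
      refine sum_congr rfl fun p hp ↦ ?_
      rw [← HasAntidiagonal.mem_antidiagonal.mp hp, mul_assoc b q, ← pow_succ' q]
      ring
    rw [sum_antidiagonal_succ_gaussBinom_mul' q
      (fun i j ↦ b ^ j * q ^ j ^ 2 * qPoch (b * q ^ (j + 1)) q i), hfst, hsnd, sub_add_cancel]

/-- The sum evaluated by the base-doubling step. Only `c = 1` is needed there, but its recurrence
in `n` involves `c = 3`, and the two values together satisfy a closed system. -/
noncomputable def doublingSum (c : ℕ) (b q : ℂ) (n : ℕ) : ℂ :=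
  ∑ p ∈ antidiagonal n, gaussBinom (q ^ 2) n p.2 *
    (q ^ (c * p.1) * qPoch (-(b * q ^ (p.2 + 1))) q p.2 * qPoch (b * q ^ (p.2 + 1)) q p.1)

theorem sum_antidiagonal_gaussBinom_mul_doubling_shift (b q : ℂ) (n : ℕ) :
    ∑ p ∈ antidiagonal n, gaussBinom (q ^ 2) n p.2 *
      (q ^ (3 * p.1) * qPoch (-(b * q ^ (p.2 + 1 + 1))) q (p.2 + 1) *
        qPoch (b * q ^ (p.2 + 1 + 1)) q p.1) =
      doublingSum 3 (b * q) q n + b * q ^ (2 * n + 2) * doublingSum 1 (b * q) q n := by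
  rw [doublingSum, doublingSum, mul_sum, ← sum_add_distrib]
  refine sum_congr rfl fun p hp ↦ ?_
  rw [← HasAntidiagonal.mem_antidiagonal.mp hp, qPoch_succ, mul_assoc b q, ← pow_succ' q]
  ring

theorem doublingSum_one_succ (b q : ℂ) (n : ℕ) :
    doublingSum 1 b q (n + 1) = q * (1 - b * q ^ (n + 1)) * doublingSum 1 b q n +
      (doublingSum 3 (b * q) q n + b * q ^ (2 * n + 2) * doublingSum 1 (b * q) q n) := by
  rw [← sum_antidiagonal_gaussBinom_mul_doubling_shift, doublingSum,
    sum_antidiagonal_succ_gaussBinom_mul' (q ^ 2) (fun i j ↦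
      q ^ (1 * i) * qPoch (-(b * q ^ (j + 1))) q j * qPoch (b * q ^ (j + 1)) q i),
    doublingSum, mul_sum]
  congr 1 <;> refine sum_congr rfl fun p hp ↦ ?_
  · rw [← HasAntidiagonal.mem_antidiagonal.mp hp, qPoch_succ]
    ring
  · ring

theorem doublingSum_three_succ (b q : ℂ) (n : ℕ) :
    doublingSum 3 b q (n + 1) = q ^ (2 * n + 3) * (1 - b * q ^ (n + 1)) * doublingSum 1 b q n +
      (doublingSum 3 (b * q) q n + b * q ^ (2 * n + 2) * doublingSum 1 (b * q) q n) := by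
  rw [← sum_antidiagonal_gaussBinom_mul_doubling_shift, doublingSum,
    sum_antidiagonal_succ_gaussBinom_mul (q ^ 2) (fun i j ↦
      q ^ (3 * i) * qPoch (-(b * q ^ (j + 1))) q j * qPoch (b * q ^ (j + 1)) q i),
    doublingSum, mul_sum]
  congr 1
  refine sum_congr rfl fun p hp ↦ ?_
  rw [← HasAntidiagonal.mem_antidiagonal.mp hp, qPoch_succ]
  ring

theorem doublingSum_one_and_three (b q : ℂ) (n : ℕ) :
    doublingSum 1 b q n = qPoch (-q) q n ∧
      doublingSum 3 b q n =
        (1 - q + q ^ (n + 1) + b * q ^ (n + 1) * (1 - q ^ n)) * qPoch (-q) q n := by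
  induction n generalizing b with
  | zero => simp [doublingSum, qPoch_zero]
  | succ n ih =>
    rw [doublingSum_one_succ, doublingSum_three_succ, (ih b).1, (ih (b * q)).1, (ih (b * q)).2,
      qPoch_succ]
    constructor <;> ring

end FiniteSums

section BaileyPair

variable {a q : ℂ} {α β : ℕ → ℂ}

/-- A Bailey pair relative to `(a, q)`. The defining relation
`β_n = ∑_{r ≤ n} α_r / ((q;q)_{n-r} (aq;q)_{n+r})` is indexed by `n = i + r`, so that
`n - r = i` and `n + r = i + 2r`. -/
def IsBaileyPair (a q : ℂ) (α β : ℕ → ℂ) : Prop :=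
  ∀ n, β n = ∑ p ∈ antidiagonal n, α p.2 / (qPoch q q p.1 * qPoch (a * q) q (p.1 + 2 * p.2))

/-- The lower triangular operator `β ↦ (n ↦ ∑_{i + m = n} K i m β_m)` on sequences; the kernel
is indexed by the gap `i = n - m` and the source index `m`. -/
def triangularTransform {R : Type*} [NonUnitalNonAssocSemiring R] (K : ℕ → ℕ → R) (β : ℕ → R)
    (n : ℕ) : R :=
  ∑ p ∈ antidiagonal n, K p.1 p.2 * β p.2

/-- The kernel of Bailey's lemma with both parameters sent to infinity. -/
noncomputable def baileyKernel (a q : ℂ) (i m : ℕ) : ℂ :=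
  a ^ m * q ^ m ^ 2 / qPoch q q i

/-- The kernel of the change of base from `(a², q²)` to `(a, q)`. -/
noncomputable def doublingKernel (a q : ℂ) (i m : ℕ) : ℂ :=
  qPoch (-(a * q)) q (2 * m) * q ^ i / qPoch (q ^ 2) (q ^ 2) i

theorem IsBaileyPair.transform {A Q : ℂ} {γ : ℕ → ℂ} {K : ℕ → ℕ → ℂ}
    (hK : ∀ i r, ∑ p ∈ antidiagonal i,
      K p.1 (p.2 + r) / (qPoch Q Q p.2 * qPoch (A * Q) Q (p.2 + 2 * r)) =
        γ r / (qPoch q q i * qPoch (a * q) q (i + 2 * r)))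
    (h : IsBaileyPair A Q α β) :
    IsBaileyPair a q (fun r ↦ γ r * α r) (triangularTransform K β) := by
  intro n
  calc triangularTransform K β n
      = ∑ p ∈ antidiagonal n, ∑ s ∈ antidiagonal p.2, K p.1 (s.1 + s.2) *
          (α s.2 / (qPoch Q Q s.1 * qPoch (A * Q) Q (s.1 + 2 * s.2))) := by
        refine sum_congr rfl fun p _ ↦ ?_
        rw [h, mul_sum]
        refine sum_congr rfl fun s hs ↦ ?_
        rw [HasAntidiagonal.mem_antidiagonal.mp hs]
    _ = ∑ p ∈ antidiagonal n, ∑ s ∈ antidiagonal p.1, α p.2 *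
          (K s.1 (s.2 + p.2) / (qPoch Q Q s.2 * qPoch (A * Q) Q (s.2 + 2 * p.2))) := by
        rw [sum_antidiagonal_assoc n (fun i j r ↦ K i (j + r) *
          (α r / (qPoch Q Q j * qPoch (A * Q) Q (j + 2 * r))))]
        exact sum_congr rfl fun p _ ↦ sum_congr rfl fun s _ ↦ mul_div_left_comm _ _ _
    _ = _ := by
        refine sum_congr rfl fun p _ ↦ ?_
        rw [← mul_sum, hK, mul_div_assoc', mul_comm (α p.2)]

theorem qPoch_mul_self_add_add_two_mul (a q : ℂ) (i j r : ℕ) :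
    qPoch (a * q) q (i + j + 2 * r) =
      qPoch (a * q) q (j + 2 * r) * qPoch (a * q ^ (2 * r) * q ^ (j + 1)) q i := by
  rw [add_assoc, add_comm, qPoch_add]
  ring_nf

theorem sum_antidiagonal_baileyKernel_div (hq : ¬IsOfFinOrder q)
    (ha : ∀ n, qPoch (a * q) q n ≠ 0) (i r : ℕ) :
    ∑ p ∈ antidiagonal i,
      baileyKernel a q p.1 (p.2 + r) / (qPoch q q p.2 * qPoch (a * q) q (p.2 + 2 * r)) =
        a ^ r * q ^ r ^ 2 / (qPoch q q i * qPoch (a * q) q (i + 2 * r)) := by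
  rw [← mul_one (a ^ r * q ^ r ^ 2), mul_div_assoc,
    ← sum_antidiagonal_gaussBinom_mul_qPoch (a * q ^ (2 * r)) q i, sum_div, mul_sum]
  refine sum_congr rfl fun p hp ↦ ?_
  have hsplit := qPoch_mul_self_add_add_two_mul a q p.1 p.2 r
  obtain ⟨hhead, htail⟩ := mul_ne_zero_iff.mp (hsplit ▸ ha (p.1 + p.2 + 2 * r))
  have hqn := qPoch_self_ne_zero hq (p.1 + p.2)
  have hqi := qPoch_self_ne_zero hq p.1
  have hqj := qPoch_self_ne_zero hq p.2
  rw [← HasAntidiagonal.mem_antidiagonal.mp hp, gaussBinom_eq_div hq, hsplit, baileyKernel]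
  field_simp
  ring

theorem doublingKernel_div (hq : ¬IsOfFinOrder q)
    (ha : ∀ n, qPoch (a ^ 2 * q ^ 2) (q ^ 2) n ≠ 0) (i j r : ℕ) :
    doublingKernel a q i (j + r) /
      (qPoch (q ^ 2) (q ^ 2) j * qPoch (a ^ 2 * q ^ 2) (q ^ 2) (j + 2 * r)) =
        gaussBinom (q ^ 2) (i + j) j *
          (q ^ i * qPoch (-(a * q ^ (2 * r) * q ^ (j + 1))) q j *
            qPoch (a * q ^ (2 * r) * q ^ (j + 1)) q i) /
          (qPoch (q ^ 2) (q ^ 2) (i + j) * qPoch (a * q) q (i + j + 2 * r)) := by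
  have hq2 : ¬IsOfFinOrder (q ^ 2) := fun h ↦ hq (h.of_pow two_ne_zero)
  have hne (n : ℕ) : qPoch (a * q) q n ≠ 0 ∧ qPoch (-(a * q)) q n ≠ 0 := by
    rw [← mul_ne_zero_iff, ← qPoch_sq, mul_pow]
    exact ha n
  have hpos := qPoch_mul_self_add_add_two_mul a q i j r
  have hneg : qPoch (-(a * q)) q (2 * (j + r)) =
      qPoch (-(a * q)) q (j + 2 * r) * qPoch (-(a * q ^ (2 * r) * q ^ (j + 1))) q j := by
    rw [show 2 * (j + r) = j + j + 2 * r by ring, ← neg_mul, qPoch_mul_self_add_add_two_mul]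
    ring_nf
  obtain ⟨hhead, htail⟩ := mul_ne_zero_iff.mp (hpos ▸ (hne (i + j + 2 * r)).1)
  have hneghead := (hne (j + 2 * r)).2
  have hqn := qPoch_self_ne_zero hq2 (i + j)
  have hqi := qPoch_self_ne_zero hq2 i
  have hqj := qPoch_self_ne_zero hq2 j
  rw [gaussBinom_eq_div hq2, doublingKernel, hneg, hpos, ← mul_pow a q, qPoch_sq (a * q)]
  field_simp

theorem sum_antidiagonal_doublingKernel_div (hq : ¬IsOfFinOrder q)
    (ha : ∀ n, qPoch (a ^ 2 * q ^ 2) (q ^ 2) n ≠ 0) (i r : ℕ) :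
    ∑ p ∈ antidiagonal i, doublingKernel a q p.1 (p.2 + r) /
      (qPoch (q ^ 2) (q ^ 2) p.2 * qPoch (a ^ 2 * q ^ 2) (q ^ 2) (p.2 + 2 * r)) =
        1 / (qPoch q q i * qPoch (a * q) q (i + 2 * r)) := by
  calc
    _ = doublingSum 1 (a * q ^ (2 * r)) q i /
        (qPoch (q ^ 2) (q ^ 2) i * qPoch (a * q) q (i + 2 * r)) := by
      rw [doublingSum, sum_div]
      refine sum_congr rfl fun p hp ↦ ?_
      rw [doublingKernel_div hq ha, HasAntidiagonal.mem_antidiagonal.mp hp, one_mul]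
    _ = _ := by
      have hq2 := qPoch_self_ne_zero (fun h ↦ hq (h.of_pow two_ne_zero) : ¬IsOfFinOrder (q ^ 2)) i
      rw [(doublingSum_one_and_three _ q i).1]
      rw [qPoch_sq] at hq2 ⊢
      obtain ⟨hqi, hnegqi⟩ := mul_ne_zero_iff.mp hq2
      field_simp

theorem IsBaileyPair.baileyTransform (hq : ¬IsOfFinOrder q) (ha : ∀ n, qPoch (a * q) q n ≠ 0)
    (h : IsBaileyPair a q α β) :
    IsBaileyPair a q (fun r ↦ a ^ r * q ^ r ^ 2 * α r)
      (triangularTransform (baileyKernel a q) β) :=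
  h.transform (sum_antidiagonal_baileyKernel_div hq ha)

theorem IsBaileyPair.doublingTransform (hq : ¬IsOfFinOrder q)
    (ha : ∀ n, qPoch (a ^ 2 * q ^ 2) (q ^ 2) n ≠ 0) (h : IsBaileyPair (a ^ 2) (q ^ 2) α β) :
    IsBaileyPair a q α (triangularTransform (doublingKernel a q) β) := by
  simpa only [one_mul] using
    h.transform (γ := fun _ ↦ 1) (sum_antidiagonal_doublingKernel_div hq ha)

/-- The `α` of the unit Bailey pair, the one whose `β` is `(1, 0, 0, …)`. -/
noncomputable def unitAlpha (a q : ℂ) (r : ℕ) : ℂ :=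
  qPoch a q r * (1 - a * q ^ (2 * r)) * (-1) ^ r * q ^ r.choose 2 / ((1 - a) * qPoch q q r)

theorem unitAlpha_zero (ha : a ≠ 1) (q : ℂ) : unitAlpha a q 0 = 1 := by
  simp [unitAlpha, qPoch_zero, sub_ne_zero.mpr ha.symm]

theorem unitAlpha_succ (ha : a ≠ 1) (q : ℂ) (r : ℕ) :
    unitAlpha a q (r + 1) = qPoch (a * q) q r * (1 - a * q ^ (2 * (r + 1))) * (-1) ^ (r + 1) *
      q ^ (r + 1).choose 2 / qPoch q q (r + 1) := by
  rw [unitAlpha, qPoch_succ_left a]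
  simp only [mul_assoc]
  rw [mul_div_mul_left _ _ (sub_ne_zero.mpr ha.symm)]

theorem one_sub_pow_mul_sum_range_unitAlpha_div (hq : ¬IsOfFinOrder q) (ha1 : a ≠ 1)
    (ha : ∀ n, qPoch (a * q) q n ≠ 0) (i R : ℕ) :
    (1 - q ^ (i + R)) * ∑ r ∈ range (R + 1),
      unitAlpha a q r / (qPoch q q (i + R - r) * qPoch (a * q) q (i + R + r)) =
        (-1) ^ R * q ^ (R + 1).choose 2 * qPoch (a * q) q R * (1 - q ^ i) /
          (qPoch q q R * qPoch q q i * qPoch (a * q) q (i + R + R)) := by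
  induction R generalizing i with
  | zero => simp [unitAlpha_zero ha1, qPoch_zero, div_eq_mul_inv, mul_comm]
  | succ R ih =>
    have ih := ih (i + 1)
    rw [show i + 1 + R = i + (R + 1) by ring] at ih
    rw [sum_range_succ, mul_add, ih, Nat.add_sub_cancel, unitAlpha_succ ha1,
      ← add_assoc (i + (R + 1)) R 1, Nat.choose_succ_succ' (R + 1), Nat.choose_one_right,
      one_add_one_eq_two, pow_add q (R + 1), qPoch_succ q q R, qPoch_succ q q i,
      qPoch_succ (a * q) q R, qPoch_succ (a * q) q (_ + R)]
    have hqR := qPoch_self_ne_zero hq (R + 1)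
    have hqi := qPoch_self_ne_zero hq (i + 1)
    have haq := ha (i + (R + 1) + R + 1)
    rw [qPoch_succ] at hqR hqi haq
    obtain ⟨hqR, hqR_last⟩ := mul_ne_zero_iff.mp hqR
    obtain ⟨hqi, hqi_last⟩ := mul_ne_zero_iff.mp hqi
    obtain ⟨haq, haq_last⟩ := mul_ne_zero_iff.mp haq
    field_simp
    ring

theorem isBaileyPair_unitAlpha (hq : ¬IsOfFinOrder q) (ha1 : a ≠ 1)
    (ha : ∀ n, qPoch (a * q) q n ≠ 0) : IsBaileyPair a q (unitAlpha a q) (Pi.single 0 1) := by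
  intro n
  rcases n.eq_zero_or_pos with rfl | hn
  · simp [unitAlpha_zero ha1, qPoch_zero]
  · have hqn : 1 - q ^ n ≠ 0 := fun h ↦
      hq (isOfFinOrder_iff_pow_eq_one.mpr ⟨n, hn, (sub_eq_zero.mp h).symm⟩)
    have hsum := one_sub_pow_mul_sum_range_unitAlpha_div hq ha1 ha 0 n
    rw [pow_zero, sub_self, mul_zero, zero_div, zero_add, mul_eq_zero_iff_left hqn] at hsum
    rw [Pi.single_eq_of_ne hn.ne', ← hsum, ← Nat.sum_antidiagonal_swap,
      Nat.sum_antidiagonal_eq_sum_range_succ_mk]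
    refine sum_congr rfl fun r hr ↦ ?_
    have hrn := Nat.lt_succ_iff.mp (mem_range.mp hr)
    rw [Prod.fst_swap, Prod.snd_swap, show n - r + 2 * r = n + r by omega]

end BaileyPair

section IteratedTransform

/-- The sequence `T_{K 0} (T_{K 1} (⋯ (T_{K (k-1)} δ₀)))`, where `T_K` is `triangularTransform K`
and `δ₀ = (1, 0, 0, …)`. -/
def iteratedTransform {R : Type*} [NonAssocSemiring R] (K : ℕ → ℕ → ℕ → R) : ℕ → ℕ → R
  | 0 => Pi.single 0 1
  | k + 1 => triangularTransform (K 0) (iteratedTransform (fun j ↦ K (j + 1)) k)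

theorem continuousAt_iteratedTransform {X R : Type*} [TopologicalSpace X] [TopologicalSpace R]
    [NonAssocSemiring R] [ContinuousAdd R] [ContinuousMul R] {K : X → ℕ → ℕ → ℕ → R} {x : X}
    (hK : ∀ j i m, ContinuousAt (fun y ↦ K y j i m) x) (k n : ℕ) :
    ContinuousAt (fun y ↦ iteratedTransform (K y) k n) x := by
  induction k generalizing K n with
  | zero => exact continuousAt_const
  | succ k ih =>
    simp only [iteratedTransform, triangularTransform]
    exact tendsto_finsetSum _ fun p _ ↦ (hK 0 p.1 p.2).mul (ih (fun j ↦ hK (j + 1)) p.2)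

end IteratedTransform

section BaileyChain

variable {a q : ℂ}

@[fun_prop]
theorem continuous_qPoch (q : ℂ) (n : ℕ) : Continuous fun x ↦ qPoch x q n := by
  unfold qPoch
  fun_prop

/-- The kernels of the successive changes of base from `(a^{2^{j+1}}, q^{2^{j+1}})` to
`(a^{2^j}, q^{2^j})`. -/
noncomputable def doublingChain (a q : ℂ) (j : ℕ) : ℕ → ℕ → ℂ :=
  doublingKernel (a ^ 2 ^ j) (q ^ 2 ^ j)

/-- The kernels behind the multisum: one step of Bailey's lemma after a chain of base changes. -/
noncomputable def baileyChain (a q : ℂ) : ℕ → ℕ → ℕ → ℂ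
  | 0 => baileyKernel a q
  | j + 1 => doublingChain a q j

theorem doublingChain_succ (a q : ℂ) :
    (fun j ↦ doublingChain a q (j + 1)) = doublingChain (a ^ 2) (q ^ 2) := by
  simp only [funext_iff, doublingChain, ← pow_mul, ← pow_succ', implies_true]

theorem forall_qPoch_ne_zero_of_pow {m : ℕ} (h : ∀ n, qPoch (a ^ m) (q ^ m) n ≠ 0) :
    ∀ n, qPoch a q n ≠ 0 := by
  rw [forall_qPoch_ne_zero_iff] at h ⊢
  intro j hj
  refine h j ?_
  rw [← pow_mul, mul_comm m, pow_mul, ← mul_pow, hj, one_pow]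

theorem isBaileyPair_doublingChain_of_forall_ne_zero (k : ℕ) (hq : ¬IsOfFinOrder q)
    (ha : ∀ n, qPoch (a ^ 2 ^ k) (q ^ 2 ^ k) n ≠ 0) :
    IsBaileyPair a q (unitAlpha (a ^ 2 ^ k) (q ^ 2 ^ k))
      (iteratedTransform (doublingChain a q) k) := by
  induction k generalizing a q with
  | zero =>
    simp only [pow_zero, pow_one] at ha ⊢
    refine isBaileyPair_unitAlpha hq (fun h ↦ ha 1 ?_) (qPoch_mul_self_ne_zero ha)
    simp [qPoch_succ, qPoch_zero, h]
  | succ k ih =>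
    have hpow (x : ℂ) : x ^ 2 ^ (k + 1) = (x ^ 2) ^ 2 ^ k := by rw [← pow_mul, pow_succ']
    simp only [hpow] at ha ⊢
    have hpair := ih (fun h ↦ hq (h.of_pow two_ne_zero)) ha
    rw [← doublingChain_succ] at hpair
    have htransform := hpair.doublingTransform hq
      (qPoch_mul_self_ne_zero (forall_qPoch_ne_zero_of_pow ha))
    rw [iteratedTransform, doublingChain, pow_zero, pow_one, pow_one]
    exact htransform

theorem dense_setOf_forall_qPoch_pow_ne_zero {m : ℕ} (hm : m ≠ 0) (q : ℂ) :
    Dense {x : ℂ | ∀ n, qPoch (x ^ m) q n ≠ 0} := by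
  have hfinite (j : ℕ) : {x : ℂ | x ^ m * q ^ j = 1}.Finite := by
    have hp : Polynomial.X ^ m * Polynomial.C (q ^ j) - 1 ≠ 0 := fun h ↦ by
      simpa [hm] using congrArg (Polynomial.eval 0) h
    refine (Polynomial.finite_setOfPred_isRoot hp).subset fun x hx ↦ ?_
    simpa [sub_eq_zero] using hx
  have hset : {x : ℂ | ∀ n, qPoch (x ^ m) q n ≠ 0} = (⋃ j, {x : ℂ | x ^ m * q ^ j = 1})ᶜ := by
    ext x
    simp [forall_qPoch_ne_zero_iff]
  rw [hset]
  exact (Set.countable_iUnion fun j ↦ (hfinite j).countable).dense_compl ℝ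

theorem isBaileyPair_doublingChain (k : ℕ) (hq : ¬IsOfFinOrder q)
    (ha : ∀ n, qPoch (a * q) q n ≠ 0) (ha1 : a ^ 2 ^ k ≠ 1) :
    IsBaileyPair a q (unitAlpha (a ^ 2 ^ k) (q ^ 2 ^ k))
      (iteratedTransform (doublingChain a q) k) := by
  intro n
  have hqk : ¬IsOfFinOrder (q ^ 2 ^ k) := fun h ↦ hq (h.of_pow (by positivity))
  have hβ : ContinuousAt (fun x ↦ iteratedTransform (doublingChain x q) k n) a := by
    refine continuousAt_iteratedTransform (fun j i m ↦ ?_) k n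
    unfold doublingChain doublingKernel
    exact ContinuousAt.div_const (by fun_prop) _
  have hα : ContinuousAt (fun x ↦ ∑ p ∈ antidiagonal n, unitAlpha (x ^ 2 ^ k) (q ^ 2 ^ k) p.2 /
      (qPoch q q p.1 * qPoch (x * q) q (p.1 + 2 * p.2))) a := by
    unfold unitAlpha
    refine tendsto_finsetSum _ fun p _ ↦
      ContinuousAt.div (ContinuousAt.div (by fun_prop) (by fun_prop) ?_) (by fun_prop) ?_
    · exact mul_ne_zero (sub_ne_zero.mpr ha1.symm) (qPoch_self_ne_zero hqk _)
    · exact mul_ne_zero (qPoch_self_ne_zero hq _) (ha _)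
  refine tendsto_nhds_unique_of_frequently_eq hβ hα ?_
  refine (mem_closure_iff_frequently.mp
    (dense_setOf_forall_qPoch_pow_ne_zero (by positivity : 2 ^ k ≠ 0) (q ^ 2 ^ k) a)).mono ?_
  exact fun x hx ↦ isBaileyPair_doublingChain_of_forall_ne_zero k hq hx n

theorem isBaileyPair_baileyChain (k : ℕ) (hq : ¬IsOfFinOrder q)
    (ha : ∀ n, qPoch (a * q) q n ≠ 0) (ha1 : a ^ 2 ^ k ≠ 1) :
    IsBaileyPair a q (fun r ↦ a ^ r * q ^ r ^ 2 * unitAlpha (a ^ 2 ^ k) (q ^ 2 ^ k) r)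
      (iteratedTransform (baileyChain a q) (k + 1)) :=
  (isBaileyPair_doublingChain k hq ha ha1).baileyTransform hq ha

end BaileyChain

section AntitoneTuples

/-- A finite tuple extended to all of `ℕ` by the convention `s_m = 0` beyond its last entry. -/
def zeroPad {n : ℕ} (s : Fin n → ℕ) (m : ℕ) : ℕ :=
  if h : m < n then s ⟨m, h⟩ else 0

theorem zeroPad_of_le {n : ℕ} (s : Fin n → ℕ) {m : ℕ} (h : n ≤ m) : zeroPad s m = 0 :=
  dif_neg h.not_gt

theorem zeroPad_zero {k : ℕ} (s : Fin (k + 1) → ℕ) : zeroPad s 0 = s 0 :=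
  rfl

theorem zeroPad_vecCons_succ {n : ℕ} (x : ℕ) (s : Fin n → ℕ) (m : ℕ) :
    zeroPad (Matrix.vecCons x s) (m + 1) = zeroPad s m := by
  by_cases h : m < n
  · rw [zeroPad, zeroPad, dif_pos h, dif_pos (Nat.succ_lt_succ h)]
    rfl
  · rw [zeroPad_of_le s (not_lt.mp h), zeroPad_of_le _ (Nat.succ_le_succ (not_lt.mp h))]

theorem antitone_zeroPad {n : ℕ} {s : Fin n → ℕ} (hs : Antitone s) : Antitone (zeroPad s) := by
  intro i j hij
  by_cases hj : j < n
  · rw [zeroPad, zeroPad, dif_pos hj, dif_pos (hij.trans_lt hj)]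
    exact hs hij
  · rw [zeroPad_of_le s (not_lt.mp hj)]
    exact Nat.zero_le _

open Classical in
/-- The weakly decreasing tuples of length `k + 1` with largest entry `n`. -/
noncomputable def antitoneTuples (k n : ℕ) : Finset (Fin (k + 1) → ℕ) :=
  {s ∈ Finset.Iic fun _ ↦ n | Antitone s ∧ s 0 = n}

theorem mem_antitoneTuples {k n : ℕ} {s : Fin (k + 1) → ℕ} :
    s ∈ antitoneTuples k n ↔ Antitone s ∧ s 0 = n := by
  rw [antitoneTuples, mem_filter, and_iff_right_iff_imp, Finset.mem_Iic]
  rintro ⟨hs, rfl⟩ i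
  exact hs (Fin.zero_le i)

theorem card_antitoneTuples_le (k n : ℕ) : #(antitoneTuples k n) ≤ (n + 1) ^ (k + 1) := by
  refine (card_filter_le _ _).trans_eq ?_
  simp [Pi.card_Iic]

theorem antitoneTuples_zero (n : ℕ) : antitoneTuples 0 n = {![n]} := by
  ext s
  have : Subsingleton (Fin (0 + 1)) := inferInstanceAs (Subsingleton (Fin 1))
  rw [mem_antitoneTuples, mem_singleton, and_iff_right (Subsingleton.antitone s)]
  simp [funext_iff]

theorem sum_antitoneTuples_succ {M : Type*} [AddCommMonoid M] (k n : ℕ)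
    (f : (Fin (k + 2) → ℕ) → M) :
    ∑ s ∈ antitoneTuples (k + 1) n, f s =
      ∑ p ∈ antidiagonal n, ∑ s ∈ antitoneTuples k p.2, f (Matrix.vecCons n s) := by
  rw [sum_sigma']
  refine sum_bij' (fun s _ ↦ ⟨(n - s 1, s 1), Matrix.vecTail s⟩)
    (fun x _ ↦ Matrix.vecCons n x.2) ?_ ?_ ?_ ?_ ?_
  · intro s hs
    obtain ⟨hanti, rfl⟩ := mem_antitoneTuples.mp hs
    have h1 : s 1 ≤ s 0 := hanti (Fin.zero_le 1)
    simp only [mem_sigma, HasAntidiagonal.mem_antidiagonal, mem_antitoneTuples]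
    exact ⟨Nat.sub_add_cancel h1, fun i j hij ↦ hanti (Fin.succ_le_succ_iff.mpr hij), rfl⟩
  · rintro ⟨⟨i, m⟩, s⟩ hs
    simp only [mem_sigma, HasAntidiagonal.mem_antidiagonal, mem_antitoneTuples] at hs
    obtain ⟨rfl, hs, rfl⟩ := hs
    exact mem_antitoneTuples.mpr ⟨antitone_vecCons.mpr ⟨Nat.le_add_left _ _, hs⟩, rfl⟩
  · intro s hs
    obtain ⟨-, rfl⟩ := mem_antitoneTuples.mp hs
    exact Matrix.cons_head_tail s
  · rintro ⟨⟨i, m⟩, s⟩ hs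
    simp only [mem_sigma, HasAntidiagonal.mem_antidiagonal, mem_antitoneTuples] at hs
    obtain ⟨rfl, -, rfl⟩ := hs
    simp
  · intro s hs
    obtain ⟨-, rfl⟩ := mem_antitoneTuples.mp hs
    exact congrArg f (Matrix.cons_head_tail s).symm

theorem iteratedTransform_succ_eq_sum {R : Type*} [CommSemiring R] (K : ℕ → ℕ → ℕ → R)
    (k n : ℕ) :
    iteratedTransform K (k + 1) n = ∑ s ∈ antitoneTuples k n, ∏ j ∈ range (k + 1),
      K j (zeroPad s j - zeroPad s (j + 1)) (zeroPad s (j + 1)) := by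
  induction k generalizing K n with
  | zero =>
    rw [antitoneTuples_zero, sum_singleton, prod_range_one, iteratedTransform,
      triangularTransform, sum_eq_single_of_mem (n, 0) (by simp)]
    · simp [iteratedTransform, zeroPad]
    · intro p hp hne
      have : p.2 ≠ 0 := fun h ↦ hne <| by
        rw [← HasAntidiagonal.mem_antidiagonal.mp hp, h, add_zero, ← h]
      rw [iteratedTransform, Pi.single_eq_of_ne this, mul_zero]
  | succ k ih =>
    rw [iteratedTransform, triangularTransform, sum_antitoneTuples_succ]
    refine sum_congr rfl fun p hp ↦ ?_
    rw [ih, mul_sum]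
    refine sum_congr rfl fun s hs ↦ ?_
    rw [prod_range_succ' _ (k + 1), mul_comm]
    simp only [zeroPad_vecCons_succ, zeroPad_zero, Matrix.cons_val_zero,
      (mem_antitoneTuples.mp hs).2]
    rw [← HasAntidiagonal.mem_antidiagonal.mp hp, Nat.add_sub_cancel]

theorem sum_pow_two_mul_sub_add {u : ℕ → ℕ} (hu : Antitone u) (k : ℕ) :
    ∑ j ∈ range k, 2 ^ j * (u j - u (j + 1)) + 2 ^ k * u k =
      u 0 + ∑ j ∈ range k, 2 ^ j * u (j + 1) := by
  induction k with
  | zero => simp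
  | succ k ih =>
    obtain ⟨d, hd⟩ := Nat.exists_eq_add_of_le (hu k.le_succ)
    rw [sum_range_succ, sum_range_succ, ← add_assoc, ← ih, hd, Nat.add_sub_cancel_left]
    ring

/-- The contribution of `s_1 ≥ s_2 ≥ ⋯ ≥ s_{k+1}`, given as `s_m = t (m - 1)`, to the term
`a^n q^{n²} β_n` of index `n = s_1`, where `β` is the iterated transform along `baileyChain a q`. -/
noncomputable def chainSummand (a q : ℂ) (k : ℕ) (t : ℕ → ℕ) : ℂ :=
  a ^ t 0 * q ^ t 0 ^ 2 * ∏ j ∈ range (k + 1), baileyChain a q j (t j - t (j + 1)) (t (j + 1))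

theorem sum_chainSummand (a q : ℂ) (k n : ℕ) :
    ∑ s ∈ antitoneTuples k n, chainSummand a q k (zeroPad s) =
      a ^ n * q ^ n ^ 2 * iteratedTransform (baileyChain a q) (k + 1) n := by
  rw [iteratedTransform_succ_eq_sum, mul_sum]
  refine sum_congr rfl fun s hs ↦ ?_
  rw [chainSummand, zeroPad_zero, (mem_antitoneTuples.mp hs).2]

theorem chainSummand_eq (a q : ℂ) {k : ℕ} {t : ℕ → ℕ} (ht : Antitone t) (htk : t (k + 1) = 0) :
    chainSummand a q k t =
      a ^ (t 0 + t 1) *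
        q ^ (t 0 ^ 2 + t 1 ^ 2 + t 1 + ∑ m ∈ Ico 2 (k + 1), 2 ^ (m - 2) * t m) /
        qPoch q q (t 0 - t 1) *
        ∏ j ∈ Ico 2 (k + 2),
          qPoch (-(a ^ 2 ^ (j - 2) * q ^ 2 ^ (j - 2))) (q ^ 2 ^ (j - 2)) (2 * t j) /
            qPoch (q ^ 2 ^ (j - 1)) (q ^ 2 ^ (j - 1)) (t (j - 1) - t j) := by
  have hsum : ∑ m ∈ Ico 2 (k + 1), 2 ^ (m - 2) * t m = ∑ j ∈ range k, 2 ^ j * t (j + 1 + 1) := by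
    rw [sum_subset (Ico_subset_Ico_right (k + 1).le_succ), sum_Ico_eq_sum_range]
    · simp [add_comm 2]
    · intro m hm hm'
      have : m = k + 1 := by simp only [Finset.mem_Ico] at hm hm'; omega
      rw [this, htk, mul_zero]
  have hexp : ∑ j ∈ range k, 2 ^ j * (t (j + 1) - t (j + 1 + 1)) =
      t 1 + ∑ j ∈ range k, 2 ^ j * t (j + 1 + 1) := by
    simpa [htk] using sum_pow_two_mul_sub_add (u := fun j ↦ t (j + 1))
      (fun i j h ↦ ht (Nat.add_le_add_right h 1)) k
  have hfactor (j : ℕ) :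
      baileyChain a q (j + 1) (t (j + 1) - t (j + 1 + 1)) (t (j + 1 + 1)) =
        q ^ (2 ^ j * (t (j + 1) - t (j + 1 + 1))) *
          (qPoch (-(a ^ 2 ^ j * q ^ 2 ^ j)) (q ^ 2 ^ j) (2 * t (j + 1 + 1)) /
            qPoch (q ^ 2 ^ (j + 1)) (q ^ 2 ^ (j + 1)) (t (j + 1) - t (j + 1 + 1))) := by
    rw [baileyChain, doublingChain, doublingKernel, ← pow_mul, ← pow_mul, ← pow_succ, mul_comm,
      mul_div_assoc]
  have hIco : ∏ j ∈ Ico 2 (k + 2),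
      qPoch (-(a ^ 2 ^ (j - 2) * q ^ 2 ^ (j - 2))) (q ^ 2 ^ (j - 2)) (2 * t j) /
        qPoch (q ^ 2 ^ (j - 1)) (q ^ 2 ^ (j - 1)) (t (j - 1) - t j) =
      ∏ j ∈ range k, qPoch (-(a ^ 2 ^ j * q ^ 2 ^ j)) (q ^ 2 ^ j) (2 * t (j + 1 + 1)) /
        qPoch (q ^ 2 ^ (j + 1)) (q ^ 2 ^ (j + 1)) (t (j + 1) - t (j + 1 + 1)) := by
    rw [prod_Ico_eq_prod_range, Nat.add_sub_cancel]
    refine prod_congr rfl fun j _ ↦ ?_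
    rw [show 2 + j - 2 = j by omega, show 2 + j - 1 = j + 1 by omega,
      show 2 + j = j + 1 + 1 by omega]
  rw [chainSummand, prod_range_succ', prod_congr rfl fun j _ ↦ hfactor j, prod_mul_distrib,
    prod_pow_eq_pow_sum, hexp, hsum, hIco]
  simp only [baileyChain, baileyKernel, zero_add]
  ring

end AntitoneTuples

section QPochLimit

variable {q : ℂ}

theorem summable_norm_neg_mul_pow (x : ℂ) (hq : ‖q‖ < 1) :
    Summable fun j : ℕ ↦ ‖-(x * q ^ j)‖ := by
  simp only [norm_neg, norm_mul, norm_pow]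
  exact (summable_geometric_of_lt_one (norm_nonneg q) hq).mul_left _

theorem tendsto_qPoch (x : ℂ) (hq : ‖q‖ < 1) :
    Tendsto (qPoch x q) atTop (𝓝 (qPochInf x q)) := by
  simpa only [← sub_eq_add_neg] using!
    (multipliable_one_add_of_summable (summable_norm_neg_mul_pow x hq)).hasProd.tendsto_prod_nat

theorem qPochInf_ne_zero {x : ℂ} (hq : ‖q‖ < 1) (hx : ∀ n, qPoch x q n ≠ 0) :
    qPochInf x q ≠ 0 := by
  rw [forall_qPoch_ne_zero_iff] at hx
  simpa only [← sub_eq_add_neg] using! tprod_one_add_ne_zero_of_summable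
    (fun j ↦ by rw [← sub_eq_add_neg]; exact sub_ne_zero.mpr (hx j).symm)
    (summable_norm_neg_mul_pow x hq)

theorem tendsto_inv_qPoch {x : ℂ} (hq : ‖q‖ < 1) (hx : ∀ n, qPoch x q n ≠ 0) :
    Tendsto (fun n ↦ (qPoch x q n)⁻¹) atTop (𝓝 (qPochInf x q)⁻¹) :=
  (tendsto_qPoch x hq).inv₀ (qPochInf_ne_zero hq hx)

theorem exists_norm_le_of_tendsto {E : Type*} [SeminormedAddCommGroup E] {u : ℕ → E} {l : E}
    (h : Tendsto u atTop (𝓝 l)) : ∃ C, ∀ n, ‖u n‖ ≤ C := by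
  obtain ⟨C, hC⟩ := h.norm.bddAbove_range
  exact ⟨C, fun n ↦ hC ⟨n, rfl⟩⟩

theorem not_isOfFinOrder_of_norm_lt_one (hq : ‖q‖ < 1) : ¬IsOfFinOrder q :=
  fun h ↦ hq.ne h.norm_eq_one

theorem norm_pow_le_one (hq : ‖q‖ < 1) (n : ℕ) : ‖q ^ n‖ ≤ 1 := by
  rw [norm_pow]
  exact pow_le_one₀ (norm_nonneg q) hq.le

theorem norm_pow_lt_one (hq : ‖q‖ < 1) {n : ℕ} (hn : n ≠ 0) : ‖q ^ n‖ < 1 := by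
  rw [norm_pow]
  exact pow_lt_one₀ (norm_nonneg q) hq hn

theorem exists_norm_inv_qPoch_self_le (hq : ‖q‖ < 1) : ∃ C, ∀ n, ‖(qPoch q q n)⁻¹‖ ≤ C :=
  exists_norm_le_of_tendsto
    (tendsto_inv_qPoch hq (qPoch_self_ne_zero (not_isOfFinOrder_of_norm_lt_one hq)))

end QPochLimit

section Summability

theorem summable_pow_mul_pow_sq (d : ℕ) {b x : ℝ} (hb : 0 ≤ b) (hx0 : 0 ≤ x) (hx1 : x < 1) :
    Summable fun n : ℕ ↦ ((n : ℝ) + 1) ^ d * (b ^ n * x ^ n ^ 2) := by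
  have hlim : Tendsto (fun n : ℕ ↦ 2 ^ d * b * x ^ n) atTop (𝓝 0) := by
    simpa using (tendsto_pow_atTop_nhds_zero_of_lt_one hx0 hx1).const_mul (2 ^ d * b)
  refine Summable.of_norm_bounded_eventually_nat (g := fun n : ℕ ↦ (1 / 2 : ℝ) ^ n)
    (summable_geometric_of_lt_one (by norm_num) (by norm_num)) ?_
  filter_upwards [hlim.eventually_le_const (by norm_num : (0 : ℝ) < 1 / 2)] with n hn
  rw [Real.norm_of_nonneg (by positivity)]
  have htwo : (n : ℝ) + 1 ≤ 2 ^ n := by exact_mod_cast Nat.lt_two_pow_self (n := n)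
  calc ((n : ℝ) + 1) ^ d * (b ^ n * x ^ n ^ 2)
      ≤ (2 ^ n) ^ d * (b ^ n * x ^ n ^ 2) := by gcongr
    _ = (2 ^ d * b * x ^ n) ^ n := by ring
    _ ≤ (1 / 2) ^ n := by gcongr

theorem summable_antitoneTuples_norm {E : Type*} [SeminormedAddCommGroup E] {k : ℕ}
    {f : (Fin (k + 1) → ℕ) → E} {g : ℕ → ℝ} (hfg : ∀ s, Antitone s → ‖f s‖ ≤ g (s 0))
    (hg : Summable fun n : ℕ ↦ ((n : ℝ) + 1) ^ (k + 1) * g n) :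
    Summable fun n ↦ ∑ s ∈ antitoneTuples k n, ‖f s‖ := by
  refine hg.of_nonneg_of_le (fun n ↦ sum_nonneg fun s _ ↦ norm_nonneg _) fun n ↦ ?_
  have hle (s) (hs : s ∈ antitoneTuples k n) : ‖f s‖ ≤ g n := by
    obtain ⟨hanti, rfl⟩ := mem_antitoneTuples.mp hs
    exact hfg s hanti
  have hg0 : 0 ≤ g n := (norm_nonneg _).trans (hfg (fun _ ↦ n) antitone_const)
  calc ∑ s ∈ antitoneTuples k n, ‖f s‖
      ≤ #(antitoneTuples k n) * g n := by simpa using sum_le_card_nsmul _ _ _ hle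
    _ ≤ ((n : ℝ) + 1) ^ (k + 1) * g n := by
      gcongr
      exact_mod_cast card_antitoneTuples_le k n

/-- The weakly decreasing tuples of length `k + 1`, sorted by their largest entry. -/
def sigmaAntitoneTuplesEquiv (k : ℕ) :
    (Σ n, antitoneTuples k n) ≃ {s : Fin (k + 1) → ℕ // Antitone s} where
  toFun x := ⟨x.2, (mem_antitoneTuples.mp x.2.2).1⟩
  invFun s := ⟨s.1 0, s.1, mem_antitoneTuples.mpr ⟨s.2, rfl⟩⟩
  left_inv := by
    rintro ⟨n, s, hs⟩
    obtain ⟨-, rfl⟩ := mem_antitoneTuples.mp hs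
    rfl
  right_inv _ := rfl

theorem tsum_antitone_eq_tsum_sum {E : Type*} [NormedAddCommGroup E] [CompleteSpace E] {k : ℕ}
    {f : (Fin (k + 1) → ℕ) → E} (hf : Summable fun n ↦ ∑ s ∈ antitoneTuples k n, ‖f s‖) :
    ∑' s : {s : Fin (k + 1) → ℕ // Antitone s}, f s = ∑' n, ∑ s ∈ antitoneTuples k n, f s := by
  have hsigma : Summable fun x : Σ n, antitoneTuples k n ↦ f x.2 := by
    refine Summable.of_norm ((summable_sigma_of_nonneg fun _ ↦ norm_nonneg _).mpr
      ⟨fun n ↦ Summable.of_finite, hf.congr fun n ↦ ?_⟩)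
    rw [tsum_fintype, sum_coe_sort _ fun s ↦ ‖f s‖]
  rw [← (sigmaAntitoneTuplesEquiv k).tsum_eq]
  refine hsigma.tsum_sigma.trans (tsum_congr fun n ↦ ?_)
  rw [tsum_fintype, sum_coe_sort _ f]

theorem tendsto_triangularTransform {R : Type*} [NormedRing R] [CompleteSpace R] {K : ℕ → ℕ → R}
    {L f : ℕ → R} {C : ℝ} (hC : ∀ i m, ‖K i m‖ ≤ C)
    (hL : ∀ m, Tendsto (fun i ↦ K i m) atTop (𝓝 (L m))) (hf : Summable fun m ↦ ‖f m‖) :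
    Tendsto (triangularTransform K f) atTop (𝓝 (∑' m, L m * f m)) := by
  have hsum (N : ℕ) : triangularTransform K f N =
      ∑' m, if m ≤ N then K (N - m) m * f m else 0 := by
    rw [triangularTransform, ← Nat.sum_antidiagonal_swap,
      Nat.sum_antidiagonal_eq_sum_range_succ_mk, tsum_eq_sum (s := range N.succ)]
    · exact sum_congr rfl fun m hm ↦ (if_pos (Nat.lt_succ_iff.mp (mem_range.mp hm))).symm
    · exact fun m hm ↦ if_neg fun h ↦ hm (mem_range.mpr (Nat.lt_succ_of_le h))
  rw [funext hsum]
  refine tendsto_tsum_of_dominated_convergence (hf.mul_left C) (fun m ↦ ?_)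
    (Eventually.of_forall fun N m ↦ ?_)
  · refine (((hL m).comp (tendsto_sub_atTop_nat m)).mul_const (f m)).congr' ?_
    filter_upwards [eventually_ge_atTop m] with N hN using (if_pos hN).symm
  · have hbound := norm_mul_le_of_le (hC (N - m) m) (le_refl ‖f m‖)
    split_ifs
    · exact hbound
    · exact norm_zero.trans_le ((norm_nonneg _).trans hbound)

end Summability

section LimitOfBaileyLemma

variable {a q : ℂ}

theorem IsBaileyPair.tsum_eq {α β : ℕ → ℂ} (hq : ‖q‖ < 1) (ha : ∀ n, qPoch (a * q) q n ≠ 0)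
    (h : IsBaileyPair a q α β) (hα : Summable fun r ↦ a ^ r * q ^ r ^ 2 * α r)
    (hβ : Summable fun n ↦ a ^ n * q ^ n ^ 2 * β n) :
    ∑' n, a ^ n * q ^ n ^ 2 * β n =
      (qPochInf (a * q) q)⁻¹ * ∑' r, a ^ r * q ^ r ^ 2 * α r := by
  have hfin := not_isOfFinOrder_of_norm_lt_one hq
  have hqq := tendsto_inv_qPoch hq (qPoch_self_ne_zero hfin)
  have haq := tendsto_inv_qPoch hq ha
  obtain ⟨A, hA⟩ := exists_norm_le_of_tendsto hqq
  obtain ⟨B, hB⟩ := exists_norm_le_of_tendsto haq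
  have hlimβ := tendsto_triangularTransform (K := fun i _ ↦ (qPoch q q i)⁻¹) (fun i _ ↦ hA i)
    (fun _ ↦ hqq) hβ.norm
  have hlimα := tendsto_triangularTransform
    (K := fun i m ↦ (qPoch q q i)⁻¹ * (qPoch (a * q) q (i + 2 * m))⁻¹)
    (fun i m ↦ norm_mul_le_of_le (hA i) (hB (i + 2 * m)))
    (fun m ↦ hqq.mul ((tendsto_add_atTop_iff_nat (2 * m)).mpr haq)) hα.norm
  have hfinite : triangularTransform (fun i _ ↦ (qPoch q q i)⁻¹) (fun n ↦ a ^ n * q ^ n ^ 2 * β n) =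
      triangularTransform (fun i m ↦ (qPoch q q i)⁻¹ * (qPoch (a * q) q (i + 2 * m))⁻¹)
        (fun r ↦ a ^ r * q ^ r ^ 2 * α r) := by
    ext N
    calc _ = triangularTransform (baileyKernel a q) β N :=
          sum_congr rfl fun p _ ↦ by rw [baileyKernel]; ring
      _ = _ := h.baileyTransform hfin ha N
      _ = _ := sum_congr rfl fun p _ ↦ by ring
  rw [hfinite] at hlimβ
  have hlim := tendsto_nhds_unique hlimβ hlimα
  rw [tsum_mul_left, tsum_mul_left, mul_assoc] at hlim
  exact mul_left_cancel₀ (inv_ne_zero (qPochInf_ne_zero hq (qPoch_self_ne_zero hfin))) hlim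

theorem summable_pow_mul_pow_sq_mul {u : ℕ → ℂ} {C : ℝ} (a : ℂ) (hq : ‖q‖ < 1)
    (hu : ∀ n, ‖u n‖ ≤ C) : Summable fun n ↦ a ^ n * q ^ n ^ 2 * u n := by
  refine ((summable_pow_mul_pow_sq 0 (norm_nonneg a) (norm_nonneg q) hq).mul_right
    C).of_norm_bounded fun n ↦ norm_mul_le_of_le (le_of_eq ?_) (hu n)
  rw [norm_mul, norm_pow, norm_pow, pow_zero, one_mul]

theorem exists_norm_pow_mul_pow_sq_le (a : ℂ) (hq : ‖q‖ < 1) :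
    ∃ C, ∀ n : ℕ, ‖a ^ n * q ^ n ^ 2‖ ≤ C := by
  have hsum := summable_pow_mul_pow_sq_mul a hq (u := fun _ ↦ 1) fun _ ↦ norm_one.le
  simpa only [mul_one] using exists_norm_le_of_tendsto hsum.tendsto_atTop_zero

theorem exists_norm_baileyKernel_le (a : ℂ) (hq : ‖q‖ < 1) :
    ∃ C, ∀ i m, ‖baileyKernel a q i m‖ ≤ C := by
  obtain ⟨A, hA⟩ := exists_norm_pow_mul_pow_sq_le a hq
  obtain ⟨B, hB⟩ := exists_norm_inv_qPoch_self_le hq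
  refine ⟨A * B, fun i m ↦ ?_⟩
  rw [baileyKernel, div_eq_mul_inv]
  exact norm_mul_le_of_le (hA m) (hB i)

theorem exists_norm_doublingKernel_le (a : ℂ) (hq : ‖q‖ < 1) :
    ∃ C, ∀ i m, ‖doublingKernel a q i m‖ ≤ C := by
  obtain ⟨A, hA⟩ := exists_norm_le_of_tendsto (tendsto_qPoch (-(a * q)) hq)
  obtain ⟨B, hB⟩ := exists_norm_inv_qPoch_self_le (norm_pow_lt_one hq two_ne_zero)
  refine ⟨A * 1 * B, fun i m ↦ ?_⟩
  rw [doublingKernel, div_eq_mul_inv]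
  exact norm_mul_le_of_le (norm_mul_le_of_le (hA (2 * m)) (norm_pow_le_one hq i)) (hB i)

theorem exists_norm_baileyChain_le (a : ℂ) (hq : ‖q‖ < 1) (j : ℕ) :
    ∃ C, ∀ i m, ‖baileyChain a q j i m‖ ≤ C := by
  cases j with
  | zero => exact exists_norm_baileyKernel_le a hq
  | succ j => exact exists_norm_doublingKernel_le _ (norm_pow_lt_one hq (by positivity))

theorem exists_norm_unitAlpha_le (a : ℂ) (hq : ‖q‖ < 1) : ∃ C, ∀ r, ‖unitAlpha a q r‖ ≤ C := by
  obtain ⟨A, hA⟩ := exists_norm_le_of_tendsto (tendsto_qPoch a hq)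
  obtain ⟨B, hB⟩ := exists_norm_inv_qPoch_self_le hq
  refine ⟨A * (‖(1 : ℂ)‖ + ‖a‖ * 1) * 1 * 1 * (‖(1 - a)⁻¹‖ * B), fun r ↦ ?_⟩
  rw [unitAlpha, div_eq_mul_inv, mul_inv]
  have hfactor : ‖1 - a * q ^ (2 * r)‖ ≤ ‖(1 : ℂ)‖ + ‖a‖ * 1 :=
    norm_sub_le_of_le le_rfl (norm_mul_le_of_le le_rfl (norm_pow_le_one hq (2 * r)))
  have hsign : ‖(-1 : ℂ) ^ r‖ ≤ 1 := by simp
  exact norm_mul_le_of_le (norm_mul_le_of_le (norm_mul_le_of_le (norm_mul_le_of_le (hA r) hfactor)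
    hsign) (norm_pow_le_one hq _)) (norm_mul_le_of_le le_rfl (hB r))

theorem summable_chainSummand (k : ℕ) (a : ℂ) (hq : ‖q‖ < 1) :
    Summable fun n ↦ ∑ s ∈ antitoneTuples k n, ‖chainSummand a q k (zeroPad s)‖ := by
  choose C hC using exists_norm_baileyChain_le a hq
  refine summable_antitoneTuples_norm
    (g := fun n ↦ ‖a‖ ^ n * ‖q‖ ^ n ^ 2 * ∏ j ∈ range (k + 1), C j) (fun s _ ↦ ?_) ?_
  · rw [chainSummand, zeroPad_zero]
    refine norm_mul_le_of_le (by rw [norm_mul, norm_pow, norm_pow]) ?_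
    rw [norm_prod]
    exact prod_le_prod (fun _ _ ↦ norm_nonneg _) fun j _ ↦ hC j _ _
  · simpa only [mul_assoc] using (summable_pow_mul_pow_sq (k + 1) (norm_nonneg a) (norm_nonneg q)
      hq).mul_right (∏ j ∈ range (k + 1), C j)

theorem tsum_chainSummand (k : ℕ) (hq : ‖q‖ < 1) (ha : ∀ n, qPoch (a * q) q n ≠ 0)
    (ha1 : a ^ 2 ^ k ≠ 1) :
    ∑' s : {s : Fin (k + 1) → ℕ // Antitone s}, chainSummand a q k (zeroPad s.1) =
      (qPochInf (a * q) q)⁻¹ * ∑' r, a ^ r * q ^ r ^ 2 *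
        (a ^ r * q ^ r ^ 2 * unitAlpha (a ^ 2 ^ k) (q ^ 2 ^ k) r) := by
  have hsum := summable_chainSummand k a hq
  rw [tsum_antitone_eq_tsum_sum (f := fun s ↦ chainSummand a q k (zeroPad s)) hsum,
    tsum_congr (sum_chainSummand a q k)]
  refine (isBaileyPair_baileyChain k (not_isOfFinOrder_of_norm_lt_one hq) ha ha1).tsum_eq hq ha
    ?_ ?_
  · obtain ⟨A, hA⟩ := exists_norm_pow_mul_pow_sq_le a hq
    obtain ⟨B, hB⟩ := exists_norm_unitAlpha_le (a ^ 2 ^ k)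
      (norm_pow_lt_one hq (by positivity : 2 ^ k ≠ 0))
    exact summable_pow_mul_pow_sq_mul a hq fun r ↦ norm_mul_le_of_le (hA r) (hB r)
  · exact (hsum.of_norm_bounded fun n ↦ norm_sum_le _ _).congr (sum_chainSummand a q k)

theorem pow_mul_pow_mul_unitAlpha (a q : ℂ) (k r : ℕ) :
    a ^ r * q ^ r ^ 2 * (a ^ r * q ^ r ^ 2 * unitAlpha (a ^ 2 ^ k) (q ^ 2 ^ k) r) =
      a ^ (2 * r) * q ^ (2 * r ^ 2 + 2 ^ k * (r * (r - 1) / 2)) *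
        (1 - a ^ 2 ^ k * q ^ (r * 2 ^ (k + 1))) * qPoch (a ^ 2 ^ k) (q ^ 2 ^ k) r *
        (-1) ^ r / ((1 - a ^ 2 ^ k) * qPoch (q ^ 2 ^ k) (q ^ 2 ^ k) r) := by
  rw [unitAlpha, Nat.choose_two_right]
  ring

end LimitOfBaileyLemma

/-- Theorem 4.3.  The tuple `s` encodes `s_1 ≥ s_2 ≥ ⋯ ≥ s_{k+1} ≥ 0` via `s_m = t (m-1)`,
with the convention `s_{k+2} = 0`, and
`E = s_1² + s_2² + s_2 + ∑_{m=3}^{k+1} 2^{m-3} s_m`. -/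
theorem theorem_4_3 (k : ℕ) (q a : ℂ)
    (h0 : 0 < ‖q‖) (h1 : ‖q‖ < 1)
    (ha : ∀ n : ℕ, 1 ≤ n → a * q ^ n ≠ 1)
    (ha2 : a ^ (2 ^ k) ≠ 1) :
    (1 / qPochInf (a * q) q) *
      (∑' r : ℕ, a ^ (2 * r) * q ^ (2 * r ^ 2 + 2 ^ k * (r * (r - 1) / 2)) *
        (1 - a ^ (2 ^ k) * q ^ (r * 2 ^ (k + 1))) * qPoch (a ^ (2 ^ k)) (q ^ (2 ^ k)) r *
        (-1) ^ r / ((1 - a ^ (2 ^ k)) * qPoch (q ^ (2 ^ k)) (q ^ (2 ^ k)) r)) =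
    ∑' s : {s : Fin (k + 1) → ℕ // Antitone s},
      (let t : ℕ → ℕ := fun m => if h : m < k + 1 then s.1 ⟨m, h⟩ else 0
       a ^ (t 0 + t 1) *
         q ^ ((t 0) ^ 2 + (t 1) ^ 2 + t 1 + ∑ m ∈ Finset.Ico 2 (k + 1), 2 ^ (m - 2) * t m) /
         qPoch q q (t 0 - t 1) *
         ∏ j ∈ Finset.Ico 2 (k + 2),
           qPoch (-(a ^ 2 ^ (j - 2) * q ^ 2 ^ (j - 2))) (q ^ 2 ^ (j - 2)) (2 * t j) /
             qPoch (q ^ 2 ^ (j - 1)) (q ^ 2 ^ (j - 1)) (t (j - 1) - t j)) := by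
  have hfactors : ∀ n, qPoch (a * q) q n ≠ 0 := forall_qPoch_ne_zero_iff.mpr fun j ↦ by
    rw [mul_assoc, ← pow_succ']
    exact ha (j + 1) j.succ_pos
  rw [one_div, ← tsum_congr (pow_mul_pow_mul_unitAlpha a q k),
    ← tsum_chainSummand k h1 hfactors ha2]
  exact tsum_congr fun s ↦ chainSummand_eq a q (antitone_zeroPad s.2) (zeroPad_of_le s.1 le_rfl)
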